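/- Let R be a basic left Harada algebra as below, let I be the two-sided ideal I := ⊕_{i,j} rad^{n_i-j+1}(e_{ij}R), and set R̄ := R/I. Then the functor F := − ⊗_R R̄ induces a bijection from the set of isomorphism classes of finitely generated right R-modules of projective dimension at most 1 onto the set of isomorphism classes of finitely generated right R̄-modules. -/

import Mathlib

/-!
Common setup.  `K` is an algebraically closed field and `R` a finite-dimensional associative
unital `K`-algebra.  Right `R`-modules are formalized as modules over the opposite ring `Rᵐᵒᵖ`
(so that `MulOpposite.op r • x = x * r`).
-/

open MulOpposite

/-- The right ideal `xR` of a ring `R`, as a submodule of `R` over `Rᵐᵒᵖ`. -/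
def rightIdeal (R : Type) [Ring R] (x : R) : Submodule Rᵐᵒᵖ R :=
  Submodule.span Rᵐᵒᵖ {x}

/-- The Jacobson radical of a submodule `N` (the intersection of the maximal submodules of the
module `N`), viewed as a submodule of the ambient module.  Iterating this operation gives the
iterated radicals `rad^k`. -/
def radSub {A M : Type} [Ring A] [AddCommGroup M] [Module A M] (N : Submodule A M) :
    Submodule A M :=
  Submodule.map N.subtype (sInf {P : Submodule A ↥N | IsCoatom P})

/-- A module is indecomposable if it is nonzero and admits no nontrivial direct sum
decomposition. -/
def IsIndecomposableMod (A M : Type) [Ring A] [AddCommGroup M] [Module A M] : Prop :=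
  Nontrivial M ∧ ∀ N N' : Submodule A M, IsCompl N N' → N = ⊥ ∨ N' = ⊥

/-- A module has projective dimension at most one iff it admits a surjection from a projective
module with projective kernel. -/
def PdLeOne (A : Type) [Ring A] (M : Type) [AddCommGroup M] [Module A M] : Prop :=
  ∃ (P : ModuleCat.{0} A) (f : ↥P →ₗ[A] M),
    Module.Projective A ↥P ∧ Function.Surjective f ∧
      Module.Projective A ↥(LinearMap.ker f)

/-- `Ext¹_A(M,N) = 0`, expressed by the splitting of every short exact sequence
`0 → N → E → M → 0`. -/
def Ext1Zero (A : Type) [Ring A] (M N : Type) [AddCommGroup M] [Module A M]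
    [AddCommGroup N] [Module A N] : Prop :=
  ∀ (E : ModuleCat.{0} A) (i : N →ₗ[A] ↥E) (p : ↥E →ₗ[A] M),
    Function.Injective i → Function.Surjective p → LinearMap.range i = LinearMap.ker p →
    ∃ s : M →ₗ[A] ↥E, p.comp s = LinearMap.id

/-- `X ∈ add T` : `X` is a direct summand of a finite direct sum of copies of `T`. -/
def InAdd (A : Type) [Ring A] (T X : Type) [AddCommGroup T] [Module A T]
    [AddCommGroup X] [Module A X] : Prop :=
  ∃ (k : ℕ) (f : X →ₗ[A] (Fin k → T)) (g : (Fin k → T) →ₗ[A] X),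
    g.comp f = LinearMap.id

/-- `T` is a (finitely generated) tilting right `R`-module: projective dimension at most one,
no self-extensions, and there is a short exact sequence `0 → R → T₀ → T₁ → 0` with
`T₀, T₁ ∈ add T`. -/
def IsTiltingRight (R : Type) [Ring R] (T : Type) [AddCommGroup T] [Module Rᵐᵒᵖ T] : Prop :=
  Module.Finite Rᵐᵒᵖ T ∧ PdLeOne Rᵐᵒᵖ T ∧ Ext1Zero Rᵐᵒᵖ T T ∧
    ∃ (T₀ T₁ : ModuleCat.{0} Rᵐᵒᵖ) (f : R →ₗ[Rᵐᵒᵖ] ↥T₀) (g : ↥T₀ →ₗ[Rᵐᵒᵖ] ↥T₁),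
      InAdd Rᵐᵒᵖ T ↥T₀ ∧ InAdd Rᵐᵒᵖ T ↥T₁ ∧
        Function.Injective f ∧ Function.Surjective g ∧ LinearMap.range f = LinearMap.ker g

/-- `T` is basic: it is an (internal) direct sum of pairwise non-isomorphic indecomposable
submodules. -/
def IsBasicMod (A : Type) [Ring A] (T : Type) [AddCommGroup T] [Module A T] : Prop :=
  ∃ (k : ℕ) (N : Fin k → Submodule A T),
    DirectSum.IsInternal N ∧ (∀ a, IsIndecomposableMod A ↥(N a)) ∧
      ∀ a b, a ≠ b → IsEmpty (↥(N a) ≃ₗ[A] ↥(N b))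

/-- The setoid identifying isomorphic modules (among those with property `P`). -/
def isoSetoid (A : Type) [Ring A] (P : ModuleCat.{0} A → Prop) :
    Setoid {M : ModuleCat.{0} A // P M} where
  r M N := Nonempty (↥M.1 ≃ₗ[A] ↥N.1)
  iseqv := ⟨fun M => ⟨LinearEquiv.refl A ↥M.1⟩, fun ⟨e⟩ => ⟨e.symm⟩,
    fun ⟨e⟩ ⟨f⟩ => ⟨e.trans f⟩⟩

/-- The data exhibiting a ring `R` as a basic left Harada algebra:
a complete set `{e i j}` of orthogonal primitive idempotents with pairwise non-isomorphic
right ideals `(e i j)R` (`R` is basic), such that each `(e i 0)R` is an injective right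
module, and `(e i j)R ≅ rad ((e i (j-1))R)` for `j ≥ 1`.  (Indices are shifted by one from
the paper: the paper's `e_{ij}` is `e i (j-1)` here.) -/
structure HaradaData (R : Type) [Ring R] : Type where
  m : ℕ
  hm : 0 < m
  n : Fin m → ℕ
  hn : ∀ i, 0 < n i
  e : (i : Fin m) → Fin (n i) → R
  idem : ∀ i j, IsIdempotentElem (e i j)
  orth : ∀ p q : Σ i : Fin m, Fin (n i), p ≠ q → e p.1 p.2 * e q.1 q.2 = 0
  sum_eq_one : ∑ p : Σ i : Fin m, Fin (n i), e p.1 p.2 = 1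
  indec : ∀ i j, IsIndecomposableMod Rᵐᵒᵖ ↥(rightIdeal R (e i j))
  basic : ∀ p q : Σ i : Fin m, Fin (n i), p ≠ q →
    IsEmpty (↥(rightIdeal R (e p.1 p.2)) ≃ₗ[Rᵐᵒᵖ] ↥(rightIdeal R (e q.1 q.2)))
  inj : ∀ i, Module.Injective Rᵐᵒᵖ ↥(rightIdeal R (e i ⟨0, hn i⟩))
  rad_iso : ∀ (i : Fin m) (j : Fin (n i)), 0 < j.val →
    Nonempty (↥(rightIdeal R (e i j)) ≃ₗ[Rᵐᵒᵖ]
      ↥(radSub (rightIdeal R (e i ⟨j.val - 1, Nat.lt_of_le_of_lt (Nat.sub_le j.val 1) j.isLt⟩))))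

variable {R : Type} [Ring R]

/-- `H.P i j = rad^j ((e i 0)R)`; this is the paper's `P_{i,j+1} = rad^j (e_{i1}R)`,
a submodule of `R`. -/
def HaradaData.P (H : HaradaData R) (i : Fin H.m) (j : Fin (H.n i)) : Submodule Rᵐᵒᵖ R :=
  radSub^[j.val] (rightIdeal R (H.e i ⟨0, H.hn i⟩))

/-- The quotient module `P_{ik}/P_{il}` (for `l ≥ k` we have `H.P i l ≤ H.P i k`). -/
abbrev HaradaData.Quot (H : HaradaData R) (i : Fin H.m) (k l : Fin (H.n i)) : Type :=
  ↥(H.P i k) ⧸ Submodule.comap (H.P i k).subtype (H.P i l)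

/-- The last index (the paper's `n_i`) in `Fin (H.n i)`. -/
def HaradaData.last (H : HaradaData R) (i : Fin H.m) : Fin (H.n i) :=
  ⟨H.n i - 1, Nat.sub_lt (H.hn i) one_pos⟩

/-- The right ideal `I = ⊕_{i,j} rad^{n_i - j + 1}(e_{ij}R)` of the paper. -/
def HaradaData.I (H : HaradaData R) : Submodule Rᵐᵒᵖ R :=
  ⨆ p : Σ i : Fin H.m, Fin (H.n i),
    radSub^[H.n p.1 - p.2.val] (rightIdeal R (H.e p.1 p.2))

/-- The submodule `T·I` of a right module `T`, for `I` a right ideal of `R`. -/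
def smulSub (I : Submodule Rᵐᵒᵖ R) (T : Type) [AddCommGroup T] [Module Rᵐᵒᵖ T] :
    Submodule Rᵐᵒᵖ T :=
  Submodule.span Rᵐᵒᵖ {x : T | ∃ (t : T) (r : R), r ∈ I ∧ x = op r • t}

/-- Restriction of scalars along `π : R →+* S`, turning a right `S`-module into a right
`R`-module (type synonym). -/
@[nolint unusedArguments]
def RestrictRight {R S : Type} [Ring R] [Ring S] (_ : R →+* S) (N : Type) [AddCommGroup N]
    [Module Sᵐᵒᵖ N] : Type := N

instance {R S : Type} [Ring R] [Ring S] (π : R →+* S) (N : Type) [AddCommGroup N]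
    [Module Sᵐᵒᵖ N] : AddCommGroup (RestrictRight π N) := inferInstanceAs (AddCommGroup N)

instance {R S : Type} [Ring R] [Ring S] (π : R →+* S) (N : Type) [AddCommGroup N]
    [Module Sᵐᵒᵖ N] : Module Rᵐᵒᵖ (RestrictRight π N) := Module.compHom N (RingHom.op π)

/-!
Two facts about the ideal `I` carry the proof.

First, `I` is a quotient of an injective module. As `e_{ij}R ≅ rad^{j-1}(e_{i1}R)`, it is a sum of
copies of the modules `rad^{n_q}(e_{q1}R)`. A map `e_{ij}R → rad^{n_q}(e_{q1}R)` extends to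
`ψ : e_{i1}R → e_{q1}R`, and `ψ` still lands in `rad^{n_q}(e_{q1}R)`: otherwise its image is some
projective `rad^k(e_{q1}R)` with `k < n_q`, so `ψ` is injective, hence bijective because `R` is
basic, and then it maps `rad^{j-1}` onto `rad^{j-1}`, which is not contained in `rad^{n_i}`.
So for every `T` the module `TI` is a quotient of an injective, and `Ext¹(U, TI) = 0` whenever `U`
has projective dimension at most one: a map `U/UI → T/TI` lifts to `U → T`, surjectively if it was
surjective, by Nakayama. Hence `T/TI` determines `T`.

Second, a submodule of `e_{ij}R` is either contained in `e_{ij}I` or equal to one of the projective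
modules `rad^k(e_{ij}R)`. By induction along exact sequences, every submodule of a finite free
module `F` containing `FI` is of the form `Q + FI` with `Q` projective. A finitely generated
`R/I`-module `F/(Q + FI)` then lifts to `F/Q`, of projective dimension at most one.
-/

section InjectiveTrace

variable {A M N : Type} [Ring A] [AddCommGroup M] [Module A M] [AddCommGroup N] [Module A N]

variable (A M) in
/-- The trace in `M` of the class of injective modules: the submodule generated by the images of
all linear maps from injective modules to `M`. -/
def injectiveTrace : Submodule A M :=
  Submodule.span A {x | ∃ (E : ModuleCat.{0} A) (f : E →ₗ[A] M),
    Module.Injective A E ∧ x ∈ LinearMap.range f}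

theorem range_le_injectiveTrace {E : Type} [AddCommGroup E] [Module A E] [Module.Injective A E]
    (f : E →ₗ[A] M) : LinearMap.range f ≤ injectiveTrace A M :=
  fun _ hx => Submodule.subset_span ⟨ModuleCat.of A E, f, ‹_›, hx⟩

theorem map_injectiveTrace_le (f : M →ₗ[A] N) :
    (injectiveTrace A M).map f ≤ injectiveTrace A N := by
  rw [injectiveTrace, Submodule.map_span_le]
  rintro _ ⟨E, g, hE, y, rfl⟩
  exact range_le_injectiveTrace (f ∘ₗ g) ⟨y, rfl⟩

theorem range_le_injectiveTrace_of_eq_top (f : M →ₗ[A] N) (hM : injectiveTrace A M = ⊤) :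
    LinearMap.range f ≤ injectiveTrace A N := by
  rw [LinearMap.range_eq_map, ← hM]
  exact map_injectiveTrace_le f

theorem injectiveTrace_eq_top_of_surjective {f : M →ₗ[A] N} (hf : Function.Surjective f)
    (hM : injectiveTrace A M = ⊤) : injectiveTrace A N = ⊤ :=
  top_le_iff.1 (LinearMap.range_eq_top.2 hf ▸ range_le_injectiveTrace_of_eq_top f hM)

theorem injectiveTrace_iSup {ι : Sort*} {L : ι → Submodule A M}
    (hL : ∀ i, injectiveTrace A (L i) = ⊤) : injectiveTrace A ↥(⨆ i, L i) = ⊤ := by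
  have hle : ⨆ i, L i ≤ (injectiveTrace A ↥(⨆ i, L i)).map (⨆ i, L i).subtype := by
    refine iSup_le fun i x hx => ?_
    exact ⟨Submodule.inclusion (le_iSup L i) ⟨x, hx⟩,
      range_le_injectiveTrace_of_eq_top _ (hL i) ⟨⟨x, hx⟩, rfl⟩, rfl⟩
  refine eq_top_iff.2 fun x _ => ?_
  obtain ⟨y, hy, hyx⟩ := hle x.2
  rwa [← Subtype.ext hyx]

theorem exists_injective_surjective_of_injectiveTrace_eq_top [Module.Finite A M]
    (h : injectiveTrace A M = ⊤) :
    ∃ (E : ModuleCat.{0} A) (f : E →ₗ[A] M), Module.Injective A E ∧ Function.Surjective f := by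
  classical
  obtain ⟨s, hs, hspan⟩ := Submodule.fg_span_iff_fg_span_finset_subset _ |>.1
    (h ▸ Module.Finite.fg_top : (injectiveTrace A M).FG)
  choose E f hE hf using fun x : s => hs x.2
  refine ⟨ModuleCat.of A (∀ x : s, E x), LinearMap.lsum A _ ℕ f, inferInstance, ?_⟩
  rw [← LinearMap.range_eq_top, eq_top_iff, ← h, injectiveTrace, hspan, Submodule.span_le]
  intro x hx
  obtain ⟨y, hy⟩ := hf ⟨x, hx⟩
  exact ⟨Pi.single ⟨x, hx⟩ y, by rw [LinearMap.lsum_piSingle, hy]⟩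

end InjectiveTrace

/-- `Ext¹(T, L) = 0` when `T` has projective dimension at most one and `L` is a quotient of an
injective module, phrased as a lifting property. -/
theorem PdLeOne.exists_lift {A T M : Type} [Ring A] [AddCommGroup T] [Module A T]
    [AddCommGroup M] [Module A M] (hT : PdLeOne A T) {L : Submodule A M}
    {E : Type} [AddCommGroup E] [Module A E] [Module.Injective A E]
    {p : E →ₗ[A] L} (hp : Function.Surjective p) (v : T →ₗ[A] M ⧸ L) :
    ∃ u : T →ₗ[A] M, L.mkQ ∘ₗ u = v := by
  obtain ⟨P, f, hP, hf, hker⟩ := hT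
  obtain ⟨g, hg⟩ := Module.projective_lifting_property L.mkQ (v ∘ₗ f) L.mkQ_surjective
  have hgker (x : LinearMap.ker f) : g x ∈ L := by
    rw [← L.ker_mkQ, LinearMap.mem_ker, ← LinearMap.comp_apply, hg, LinearMap.comp_apply, x.2,
      map_zero]
  obtain ⟨k, hk⟩ := Module.projective_lifting_property p
    ((g ∘ₗ (LinearMap.ker f).subtype).codRestrict L hgker) hp
  obtain ⟨l, hl⟩ := Module.Injective.extension_property A E _ P _
    (LinearMap.ker f).injective_subtype k
  let g' : P →ₗ[A] M := g - L.subtype ∘ₗ p ∘ₗ l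
  have hg' : LinearMap.ker f ≤ LinearMap.ker g' := by
    intro x hx
    have hlx : (p (l x) : M) = g x := by
      rw [show l x = k ⟨x, hx⟩ from LinearMap.congr_fun hl ⟨x, hx⟩]
      exact congrArg Subtype.val (LinearMap.congr_fun hk ⟨x, hx⟩)
    simp [g', hlx]
  refine ⟨(LinearMap.ker f).liftQ g' hg' ∘ₗ (f.quotKerEquivOfSurjective hf).symm, ?_⟩
  ext t
  obtain ⟨x, rfl⟩ := hf t
  have hx : (f.quotKerEquivOfSurjective hf).symm (f x) = (LinearMap.ker f).mkQ x := by
    rw [LinearEquiv.symm_apply_eq]; rfl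
  have hpl : (Submodule.Quotient.mk (p (l x) : M) : M ⧸ L) = 0 :=
    (Submodule.Quotient.mk_eq_zero L).2 (p (l x)).2
  simpa [g', hx, hpl] using LinearMap.congr_fun hg x

theorem surjective_of_surjective_mkQ_comp {A M N : Type} [Ring A] [AddCommGroup M] [Module A M]
    [AddCommGroup N] [Module A N] [Module.Finite A N] {L : Submodule A N}
    (hL : L ≤ Module.jacobson A N) {f : M →ₗ[A] N} (hf : Function.Surjective (L.mkQ ∘ₗ f)) :
    Function.Surjective f := by
  rw [← LinearMap.range_eq_top, LinearMap.range_comp, Submodule.map_mkQ_eq_top] at hf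
  rw [← LinearMap.range_eq_top]
  by_contra hne
  obtain ⟨C, hC, hle⟩ := (eq_top_or_exists_le_coatom (LinearMap.range f)).resolve_left hne
  exact hC.1 (eq_top_iff.2 (hf ▸ sup_le (hL.trans (sInf_le hC)) hle))

theorem nonempty_linearEquiv_of_surjective {A M N : Type} [Ring A] [AddCommGroup M] [Module A M]
    [AddCommGroup N] [Module A N] [IsNoetherian A M] {f : M →ₗ[A] N} {g : N →ₗ[A] M}
    (hf : Function.Surjective f) (hg : Function.Surjective g) : Nonempty (M ≃ₗ[A] N) :=
  have hgf : Function.Injective (g ∘ f) :=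
    IsNoetherian.injective_of_surjective_endomorphism (g ∘ₗ f) (hg.comp hf)
  ⟨LinearEquiv.ofBijective f ⟨hgf.of_comp, hf⟩⟩

section SmulSub

variable {I : Submodule Rᵐᵒᵖ R} {T T' : Type} [AddCommGroup T] [AddCommGroup T']
  [Module Rᵐᵒᵖ T'] [Module Rᵐᵒᵖ T]

/-- The map `R → T`, `r ↦ t r`, given by an element `t` of a right module `T`.  For `T = R` it is
left multiplication by `t`. -/
def rightOrbitMap (t : T) : R →ₗ[Rᵐᵒᵖ] T where
  toFun r := op r • t
  map_add' r s := by rw [op_add, add_smul]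
  map_smul' a r := mul_smul a (op r) t

@[simp]
theorem rightOrbitMap_apply (t : T) (r : R) : rightOrbitMap t r = op r • t := rfl

theorem map_rightOrbitMap_le_smulSub (t : T) : I.map (rightOrbitMap t) ≤ smulSub I T := by
  rintro _ ⟨r, hr, rfl⟩
  exact Submodule.subset_span ⟨t, r, hr, rfl⟩

theorem smulSub_eq_iSup_map : smulSub I T = ⨆ t : T, I.map (rightOrbitMap t) := by
  refine le_antisymm (Submodule.span_le.2 ?_) (iSup_le map_rightOrbitMap_le_smulSub)
  rintro _ ⟨t, r, hr, rfl⟩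
  exact Submodule.mem_iSup_of_mem t ⟨r, hr, rfl⟩

theorem map_smulSub_eq_iSup (f : T →ₗ[Rᵐᵒᵖ] T') :
    (smulSub I T).map f = ⨆ t : T, I.map (rightOrbitMap (f t)) := by
  rw [smulSub_eq_iSup_map, Submodule.map_iSup]
  refine iSup_congr fun t => ?_
  rw [← Submodule.map_comp]
  congr 1
  ext
  simp

theorem map_smulSub_le (f : T →ₗ[Rᵐᵒᵖ] T') : (smulSub I T).map f ≤ smulSub I T' :=
  map_smulSub_eq_iSup f ▸ iSup_le fun t => map_rightOrbitMap_le_smulSub (f t)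

theorem map_smulSub_of_surjective {f : T →ₗ[Rᵐᵒᵖ] T'} (hf : Function.Surjective f) :
    (smulSub I T).map f = smulSub I T' := by
  rw [map_smulSub_eq_iSup, smulSub_eq_iSup_map,
    hf.iSup_comp (g := fun t => I.map (rightOrbitMap t))]

theorem smulSub_le_jacobson (hI : I ≤ Module.jacobson Rᵐᵒᵖ R) :
    smulSub I T ≤ Module.jacobson Rᵐᵒᵖ T :=
  smulSub_eq_iSup_map.trans_le <| iSup_le fun _ =>
    (Submodule.map_mono hI).trans (Module.map_jacobson_le _)

theorem injectiveTrace_smulSub (hI : injectiveTrace Rᵐᵒᵖ I = ⊤) :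
    injectiveTrace Rᵐᵒᵖ (smulSub I T) = ⊤ := by
  rw [smulSub_eq_iSup_map]
  exact injectiveTrace_iSup fun t =>
    injectiveTrace_eq_top_of_surjective ((rightOrbitMap t).submoduleMap_surjective I) hI

theorem quotientSMulSub_congr (e : T ≃ₗ[Rᵐᵒᵖ] T') :
    Nonempty ((T ⧸ smulSub I T) ≃ₗ[Rᵐᵒᵖ] (T' ⧸ smulSub I T')) :=
  ⟨Submodule.Quotient.equiv _ _ e (map_smulSub_of_surjective e.surjective)⟩

theorem PdLeOne.exists_surjective_of_quotientSMulSub [IsNoetherianRing Rᵐᵒᵖ]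
    (hrad : I ≤ Module.jacobson Rᵐᵒᵖ R) (htrace : injectiveTrace Rᵐᵒᵖ I = ⊤)
    [Module.Finite Rᵐᵒᵖ T'] (hT : PdLeOne Rᵐᵒᵖ T)
    (e : (T ⧸ smulSub I T) ≃ₗ[Rᵐᵒᵖ] (T' ⧸ smulSub I T')) :
    ∃ f : T →ₗ[Rᵐᵒᵖ] T', Function.Surjective f := by
  obtain ⟨E, p, hE, hp⟩ := exists_injective_surjective_of_injectiveTrace_eq_top
    (injectiveTrace_smulSub (T := T') htrace)
  obtain ⟨f, hf⟩ := hT.exists_lift hp (e ∘ₗ (smulSub I T).mkQ)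
  refine ⟨f, surjective_of_surjective_mkQ_comp (smulSub_le_jacobson hrad) ?_⟩
  rw [hf]
  exact e.surjective.comp (Submodule.mkQ_surjective _)

theorem PdLeOne.nonempty_linearEquiv_iff [IsNoetherianRing Rᵐᵒᵖ]
    (hrad : I ≤ Module.jacobson Rᵐᵒᵖ R) (htrace : injectiveTrace Rᵐᵒᵖ I = ⊤)
    [Module.Finite Rᵐᵒᵖ T] [Module.Finite Rᵐᵒᵖ T'] (hT : PdLeOne Rᵐᵒᵖ T)
    (hT' : PdLeOne Rᵐᵒᵖ T') :
    Nonempty (T ≃ₗ[Rᵐᵒᵖ] T') ↔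
      Nonempty ((T ⧸ smulSub I T) ≃ₗ[Rᵐᵒᵖ] (T' ⧸ smulSub I T')) := by
  refine ⟨fun ⟨e⟩ => quotientSMulSub_congr e, fun ⟨e⟩ => ?_⟩
  obtain ⟨f, hf⟩ := hT.exists_surjective_of_quotientSMulSub hrad htrace e
  obtain ⟨g, hg⟩ := hT'.exists_surjective_of_quotientSMulSub hrad htrace e.symm
  exact nonempty_linearEquiv_of_surjective hf hg

end SmulSub

theorem exists_projective_submodule_of_exact {A X Y Z : Type} [Ring A]
    [AddCommGroup X] [Module A X] [AddCommGroup Y] [Module A Y] [AddCommGroup Z] [Module A Z]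
    {i : X →ₗ[A] Y} {p : Y →ₗ[A] Z}
    (hi : Function.Injective i) (hip : Function.Exact i p) {L : Submodule A Y}
    {QX : Submodule A X} {QZ : Submodule A Z} [Module.Projective A QX]
    [Module.Projective A QZ] (hX : QX ≤ L.comap i) (hZ : QZ ≤ L.map p) :
    ∃ Q : Submodule A Y, Module.Projective A Q ∧ Q ≤ L ∧ QX.map i ≤ Q ∧ QZ ≤ Q.map p := by
  obtain ⟨s, hs⟩ := Module.projective_lifting_property _ (Submodule.inclusion hZ)
    (p.submoduleMap_surjective L)
  have hps (z : QZ) : p (s z) = z := congrArg Subtype.val (LinearMap.congr_fun hs z)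
  let F : QX × QZ →ₗ[A] Y := (i ∘ₗ QX.subtype).coprod (L.subtype ∘ₗ s)
  have hF (a : QX) (b : QZ) : F (a, b) = i a + s b := rfl
  have hpF (a : QX) (b : QZ) : p (F (a, b)) = b := by
    rw [hF, map_add, hip.apply_apply_eq_zero, zero_add, hps]
  have hFinj : Function.Injective F := by
    refine (injective_iff_map_eq_zero F).2 fun ⟨a, b⟩ hab => ?_
    obtain rfl : b = 0 := Subtype.ext (by rw [← hpF a b, hab, map_zero]; rfl)
    have ha : i a = i 0 := by simpa [hF] using hab
    exact Prod.ext (Subtype.ext (hi ha)) rfl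
  refine ⟨LinearMap.range F, .of_equiv (LinearEquiv.ofInjective F hFinj), ?_, ?_, ?_⟩
  · rintro _ ⟨⟨a, b⟩, rfl⟩
    exact L.add_mem (hX a.2) (s b).2
  · rintro _ ⟨a, ha, rfl⟩
    exact ⟨(⟨a, ha⟩, 0), by simp [hF]⟩
  · exact fun z hz => ⟨F (0, ⟨z, hz⟩), ⟨_, rfl⟩, hpF _ _⟩

section ProjectiveLifts

variable {I : Submodule Rᵐᵒᵖ R} {X Y Z : Type} [AddCommGroup X] [Module Rᵐᵒᵖ X]
  [AddCommGroup Y] [Module Rᵐᵒᵖ Y] [AddCommGroup Z] [Module Rᵐᵒᵖ Z]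

variable (I X) in
/-- Every submodule of `X / XI` is the image of a projective submodule of `X`.  This is what allows
`R/I`-modules to be lifted to `R`-modules of projective dimension at most one. -/
def HasProjectiveLifts : Prop :=
  ∀ L : Submodule Rᵐᵒᵖ X, smulSub I X ≤ L →
    ∃ Q : Submodule Rᵐᵒᵖ X, Module.Projective Rᵐᵒᵖ Q ∧ Q ⊔ smulSub I X = L

theorem HasProjectiveLifts.of_subsingleton [Subsingleton X] : HasProjectiveLifts I X :=
  fun _ _ => ⟨⊥, inferInstance, Subsingleton.elim _ _⟩

theorem HasProjectiveLifts.of_exact (hX : HasProjectiveLifts I X) (hZ : HasProjectiveLifts I Z)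
    {i : X →ₗ[Rᵐᵒᵖ] Y} {p : Y →ₗ[Rᵐᵒᵖ] Z} (hi : Function.Injective i)
    (hp : Function.Surjective p) (hip : Function.Exact i p) : HasProjectiveLifts I Y := by
  intro L hL
  have hmapI := map_smulSub_of_surjective (I := I) hp
  obtain ⟨QX, _, hQX⟩ := hX (L.comap i)
    (Submodule.map_le_iff_le_comap.1 ((map_smulSub_le i).trans hL))
  obtain ⟨QZ, _, hQZ⟩ := hZ (L.map p) (hmapI ▸ Submodule.map_mono hL)
  obtain ⟨Q, hQ, hQL, hQXQ, hQZQ⟩ := exists_projective_submodule_of_exact hi hip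
    (hQX ▸ le_sup_left) (hQZ ▸ le_sup_left)
  refine ⟨Q, hQ, eq_of_le_of_inf_le_of_le_sup (z := LinearMap.ker p) (sup_le hQL hL) ?_ ?_⟩
  · rintro _ ⟨hxL, hxp⟩
    obtain ⟨x, rfl⟩ := (hip _).1 hxp
    have hx : i x ∈ (QX ⊔ smulSub I X).map i := ⟨x, hQX ▸ hxL, rfl⟩
    rw [Submodule.map_sup] at hx
    exact sup_le_sup hQXQ (map_smulSub_le i) hx
  · rw [← LinearMap.map_le_map_iff, ← hQZ, Submodule.map_sup, hmapI]
    exact sup_le_sup_right hQZQ _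

theorem HasProjectiveLifts.of_equiv (hX : HasProjectiveLifts I X) (e : X ≃ₗ[Rᵐᵒᵖ] Y) :
    HasProjectiveLifts I Y :=
  hX.of_exact (Z := PUnit) (p := 0) .of_subsingleton e.injective
    (fun _ => ⟨0, rfl⟩) ((LinearMap.exact_zero_iff_surjective _ _).2 e.surjective)

theorem HasProjectiveLifts.prod (hX : HasProjectiveLifts I X) (hY : HasProjectiveLifts I Y) :
    HasProjectiveLifts I (X × Y) :=
  hX.of_exact hY LinearMap.inl_injective Prod.snd_surjective Function.Exact.inl_snd

theorem HasProjectiveLifts.piFin : ∀ {k : ℕ} {X : Fin k → Type}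
    [∀ a, AddCommGroup (X a)] [∀ a, Module Rᵐᵒᵖ (X a)],
    (∀ a, HasProjectiveLifts I (X a)) → HasProjectiveLifts I (∀ a, X a)
  | 0, _, _, _, _ => .of_subsingleton
  | _ + 1, X, _, _, h =>
    ((h 0).prod (piFin fun a => h a.succ)).of_equiv (Fin.consLinearEquiv Rᵐᵒᵖ X)

theorem HasProjectiveLifts.pi {ι : Type} [Finite ι] {X : ι → Type} [∀ a, AddCommGroup (X a)]
    [∀ a, Module Rᵐᵒᵖ (X a)] (h : ∀ a, HasProjectiveLifts I (X a)) :
    HasProjectiveLifts I (∀ a, X a) :=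
  (piFin fun a => h ((Finite.equivFin ι).symm a)).of_equiv
    (LinearEquiv.piCongrLeft Rᵐᵒᵖ X (Finite.equivFin ι).symm)

theorem HasProjectiveLifts.exists_pdLeOne_quotient [Module.Projective Rᵐᵒᵖ X]
    (hX : HasProjectiveLifts I X) (hY : smulSub I Y = ⊥) {f : X →ₗ[Rᵐᵒᵖ] Y}
    (hf : Function.Surjective f) :
    ∃ Q : Submodule Rᵐᵒᵖ X, PdLeOne Rᵐᵒᵖ (X ⧸ Q) ∧
      Nonempty (Y ≃ₗ[Rᵐᵒᵖ] (X ⧸ Q) ⧸ smulSub I (X ⧸ Q)) := by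
  obtain ⟨Q, hQ, hQker⟩ := hX (LinearMap.ker f) <| by
    rw [LinearMap.le_ker_iff_map, map_smulSub_of_surjective hf, hY]
  have hQproj : Module.Projective Rᵐᵒᵖ (LinearMap.ker Q.mkQ) := by rwa [Q.ker_mkQ]
  have hmap : (LinearMap.ker f).map Q.mkQ = smulSub I (X ⧸ Q) := by
    rw [← hQker, Submodule.map_sup, map_smulSub_of_surjective Q.mkQ_surjective,
      Submodule.mkQ_map_self, bot_sup_eq]
  refine ⟨Q, ⟨ModuleCat.of _ X, Q.mkQ, ‹_›, Q.mkQ_surjective, hQproj⟩, ⟨?_⟩⟩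
  exact (f.quotKerEquivOfSurjective hf).symm ≪≫ₗ
    (Submodule.quotientQuotientEquivQuotient Q _ (hQker ▸ le_sup_left)).symm ≪≫ₗ
    Submodule.quotEquivOfEq _ _ hmap

variable (R) in
/-- The regular right module, seen on the carrier `R` and on the carrier `Rᵐᵒᵖ`. -/
def regularRightModuleEquiv : R ≃ₗ[Rᵐᵒᵖ] Rᵐᵒᵖ where
  __ := opAddEquiv
  map_smul' _ _ := rfl

theorem HasProjectiveLifts.exists_pdLeOne (hR : HasProjectiveLifts I R) [Module.Finite Rᵐᵒᵖ Y]
    (hY : smulSub I Y = ⊥) :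
    ∃ T : ModuleCat.{0} Rᵐᵒᵖ, (Module.Finite Rᵐᵒᵖ T ∧ PdLeOne Rᵐᵒᵖ T) ∧
      Nonempty (Y ≃ₗ[Rᵐᵒᵖ] T ⧸ smulSub I T) := by
  obtain ⟨k, f, hf⟩ := Module.Finite.exists_fin' Rᵐᵒᵖ Y
  have hfree : HasProjectiveLifts I (Fin k → Rᵐᵒᵖ) :=
    .pi fun _ => hR.of_equiv (regularRightModuleEquiv R)
  obtain ⟨Q, hQ, e⟩ := hfree.exists_pdLeOne_quotient hY hf
  exact ⟨ModuleCat.of _ ((Fin k → Rᵐᵒᵖ) ⧸ Q), ⟨inferInstance, hQ⟩, e⟩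

end ProjectiveLifts

section RestrictRight

variable {S : Type} [Ring S] {π : R →+* S} {N N' : Type} [AddCommGroup N]
  [AddCommGroup N'] [Module Sᵐᵒᵖ N'] [Module Sᵐᵒᵖ N]

variable (π N) in
/-- The identity of `N`, as a semilinear map from the restriction of scalars of `N` to `N`. -/
def ofRestrictRight : RestrictRight π N →ₛₗ[RingHom.op π] N where
  toFun x := x
  map_add' _ _ := rfl
  map_smul' _ _ := rfl

theorem ofRestrictRight_bijective : Function.Bijective (ofRestrictRight π N) :=
  Function.bijective_id

theorem surjective_ringHom_op (hπ : Function.Surjective π) :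
    Function.Surjective (RingHom.op π) :=
  op_surjective.comp (hπ.comp unop_surjective)

theorem smulSub_restrictRight_eq_bot {I : Submodule Rᵐᵒᵖ R} (hI : ∀ r ∈ I, π r = 0) :
    smulSub I (RestrictRight π N) = ⊥ := by
  rw [smulSub, Submodule.span_eq_bot]
  rintro _ ⟨t, r, hr, rfl⟩
  refine ofRestrictRight_bijective.1 ?_
  rw [map_smulₛₗ, RingHom.op_apply_apply, unop_op, hI r hr, op_zero, zero_smul,
    map_zero]

theorem restrictRight_finite_iff (hπ : Function.Surjective π) :
    Module.Finite Rᵐᵒᵖ (RestrictRight π N) ↔ Module.Finite Sᵐᵒᵖ N := by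
  have : RingHomSurjective (RingHom.op π) := ⟨surjective_ringHom_op hπ⟩
  exact LinearMap.finite_iff_of_bijective (ofRestrictRight π N) ofRestrictRight_bijective

theorem restrictRight_equiv_iff (hπ : Function.Surjective π) :
    Nonempty (RestrictRight π N ≃ₗ[Rᵐᵒᵖ] RestrictRight π N') ↔ Nonempty (N ≃ₗ[Sᵐᵒᵖ] N') := by
  refine ⟨fun ⟨e⟩ => ⟨AddEquiv.toLinearEquiv (e.toAddEquiv : N ≃+ N') fun s x => ?_⟩,
    fun ⟨e⟩ => ⟨AddEquiv.toLinearEquiv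
      (e.toAddEquiv : RestrictRight π N ≃+ RestrictRight π N') fun r x => ?_⟩⟩
  · obtain ⟨r, hr⟩ := hπ (unop s)
    obtain rfl : op (π r) = s := by rw [hr, op_unop]
    exact e.map_smul (op r) x
  · exact e.map_smul (op (π (unop r))) x

theorem exists_restrictRight_equiv (hπ : Function.Surjective π) {T : Type} [AddCommGroup T]
    [Module Rᵐᵒᵖ T] (hT : ∀ r : R, π r = 0 → ∀ t : T, op r • t = 0) :
    ∃ N : ModuleCat.{0} Sᵐᵒᵖ, Nonempty (RestrictRight π N ≃ₗ[Rᵐᵒᵖ] T) := by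
  let φ : Sᵐᵒᵖ →+* AddMonoid.End T := RingHom.liftOfSurjective (RingHom.op π)
    (surjective_ringHom_op hπ) ⟨Module.toAddMonoidEnd Rᵐᵒᵖ T, fun a ha =>
      AddMonoidHom.ext fun t => hT (unop a) (op_injective ha) t⟩
  have hφ (a : Rᵐᵒᵖ) (t : T) : φ (RingHom.op π a) t = a • t :=
    DFunLike.congr_fun (RingHom.liftOfRightInverse_comp_apply ..) t
  let _ : Module Sᵐᵒᵖ T := Module.compHom T φ
  exact ⟨ModuleCat.of Sᵐᵒᵖ T,
    ⟨AddEquiv.toLinearEquiv (AddEquiv.refl T : RestrictRight π T ≃+ T) hφ⟩⟩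

end RestrictRight

theorem exists_bijective_quotient_map {α β : Type*} {s : Setoid α} {t : Setoid β}
    {r : α → β → Prop} (hleft : ∀ a, ∃ b, r a b) (hright : ∀ b, ∃ a, r a b)
    (hr : ∀ {a a' b b'}, r a b → r a' b' → (s a a' ↔ t b b')) :
    ∃ Φ : Quotient s → Quotient t, Function.Bijective Φ ∧
      ∀ a b, r a b → Φ (Quotient.mk s a) = Quotient.mk t b := by
  choose g hg using hleft
  refine ⟨Quotient.map g fun a a' h => (hr (hg a) (hg a')).1 h, ⟨?_, ?_⟩, fun a b h =>
    Quotient.sound ((hr (hg a) h).1 (s.refl a))⟩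
  · rintro ⟨a⟩ ⟨a'⟩ h
    exact Quotient.sound ((hr (hg a) (hg a')).2 (Quotient.exact h))
  · rintro ⟨b⟩
    obtain ⟨a, h⟩ := hright b
    exact ⟨Quotient.mk s a, Quotient.sound ((hr (hg a) h).1 (s.refl a))⟩

theorem exists_restrictRight_equiv_quotient {S : Type} [Ring S] {π : R →+* S}
    (hπ : Function.Surjective π) {I : Submodule Rᵐᵒᵖ R} (hI : ∀ r, π r = 0 → r ∈ I) (T : Type)
    [AddCommGroup T] [Module Rᵐᵒᵖ T] [Module.Finite Rᵐᵒᵖ T] :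
    ∃ N : ModuleCat.{0} Sᵐᵒᵖ, Module.Finite Sᵐᵒᵖ N ∧
      Nonempty (RestrictRight π N ≃ₗ[Rᵐᵒᵖ] T ⧸ smulSub I T) := by
  obtain ⟨N, ⟨e⟩⟩ := exists_restrictRight_equiv (T := T ⧸ smulSub I T) hπ fun r hr t => by
    obtain ⟨t, rfl⟩ := Submodule.mkQ_surjective _ t
    rw [← map_smul, Submodule.mkQ_apply, Submodule.Quotient.mk_eq_zero]
    exact map_rightOrbitMap_le_smulSub t ⟨r, hI r hr, rfl⟩
  exact ⟨N, (restrictRight_finite_iff hπ).1 (Module.Finite.equiv e.symm), ⟨e⟩⟩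

theorem exists_bijective_isoClasses [IsNoetherianRing Rᵐᵒᵖ] {I : Submodule Rᵐᵒᵖ R}
    (hrad : I ≤ Module.jacobson Rᵐᵒᵖ R) (htrace : injectiveTrace Rᵐᵒᵖ I = ⊤)
    (hlifts : HasProjectiveLifts I R) {S : Type} [Ring S] {π : R →+* S}
    (hπ : Function.Surjective π) (hker : ∀ r, π r = 0 ↔ r ∈ I) :
    ∃ Φ : Quotient (isoSetoid Rᵐᵒᵖ fun M => Module.Finite Rᵐᵒᵖ M ∧ PdLeOne Rᵐᵒᵖ M) →
        Quotient (isoSetoid Sᵐᵒᵖ fun M => Module.Finite Sᵐᵒᵖ M),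
      Function.Bijective Φ ∧
      ∀ (T : {M : ModuleCat.{0} Rᵐᵒᵖ // Module.Finite Rᵐᵒᵖ M ∧ PdLeOne Rᵐᵒᵖ M})
        (N : {M : ModuleCat.{0} Sᵐᵒᵖ // Module.Finite Sᵐᵒᵖ M}),
        Nonempty (RestrictRight π N.1 ≃ₗ[Rᵐᵒᵖ] (T.1 ⧸ smulSub I T.1)) →
        Φ (Quotient.mk _ T) = Quotient.mk _ N := by
  refine exists_bijective_quotient_map ?_ ?_ ?_
  · rintro ⟨T, hT, -⟩
    obtain ⟨N, hN, e⟩ := exists_restrictRight_equiv_quotient hπ (fun r => (hker r).1) T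
    exact ⟨⟨N, hN⟩, e⟩
  · rintro ⟨N, hN⟩
    have := (restrictRight_finite_iff hπ).2 hN
    obtain ⟨T, hT, e⟩ := hlifts.exists_pdLeOne
      (smulSub_restrictRight_eq_bot (N := N) fun r => (hker r).2)
    exact ⟨⟨T, hT⟩, e⟩
  · rintro ⟨T, hT, hTpd⟩ ⟨T', hT', hTpd'⟩ ⟨N, hN⟩ ⟨N', hN'⟩ ⟨e⟩ ⟨e'⟩
    refine (hTpd.nonempty_linearEquiv_iff hrad htrace hTpd').trans
      (Iff.trans ⟨fun ⟨f⟩ => ⟨e ≪≫ₗ f ≪≫ₗ e'.symm⟩, fun ⟨f⟩ => ⟨e.symm ≪≫ₗ f ≪≫ₗ e'⟩⟩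
        (restrictRight_equiv_iff hπ))

section Radical

variable {A M M' : Type} [Ring A] [AddCommGroup M] [Module A M] [AddCommGroup M'] [Module A M']

theorem radSub_eq_map_jacobson (N : Submodule A M) :
    radSub N = (Module.jacobson A N).map N.subtype := rfl

theorem radSub_le (N : Submodule A M) : radSub N ≤ N :=
  Submodule.map_subtype_le N _

theorem radSub_le_jacobson (N : Submodule A M) : radSub N ≤ Module.jacobson A M :=
  Module.map_jacobson_le N.subtype

theorem radSub_iterate_anti (N : Submodule A M) {k l : ℕ} (hkl : k ≤ l) :
    radSub^[l] N ≤ radSub^[k] N :=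
  Function.antitone_iterate_of_le_id radSub_le hkl N

theorem radSub_lt {N : Submodule A M} [Nontrivial N] [Module.Finite A N] : radSub N < N :=
  calc radSub N = (Module.jacobson A N).map N.subtype := rfl
    _ < (⊤ : Submodule A N).map N.subtype :=
      Submodule.map_strictMono_of_injective N.injective_subtype (Module.jacobson_lt_top A N)
    _ = N := Submodule.map_subtype_top N

theorem radSub_map_of_injective {f : M →ₗ[A] M'} (hf : Function.Injective f)
    (N : Submodule A M) : radSub (N.map f) = (radSub N).map f := by
  let e := Submodule.equivMapOfInjective f hf N
  have hjac : (Module.jacobson A N).map e.toLinearMap = Module.jacobson A (N.map f) :=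
    Module.map_jacobson_of_bijective e.bijective
  rw [radSub_eq_map_jacobson, radSub_eq_map_jacobson, ← hjac, ← Submodule.map_comp,
    ← Submodule.map_comp]
  rfl

theorem radSub_iterate_map_of_injective {f : M →ₗ[A] M'} (hf : Function.Injective f)
    (N : Submodule A M) (k : ℕ) : radSub^[k] (N.map f) = (radSub^[k] N).map f :=
  ((Function.Semiconj.iterate_right (f := Submodule.map f)
    (fun N => (radSub_map_of_injective hf N).symm) k) N).symm

theorem nonempty_radSub_equiv {N : Submodule A M} {N' : Submodule A M'}
    (e : Nonempty (N ≃ₗ[A] N')) : Nonempty (radSub N ≃ₗ[A] radSub N') := by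
  obtain ⟨e⟩ := e
  have hjac : (Module.jacobson A N).map e.toLinearMap = Module.jacobson A N' :=
    Module.map_jacobson_of_bijective e.bijective
  exact ⟨(Submodule.equivMapOfInjective _ N.injective_subtype _).symm ≪≫ₗ
    e.submoduleMap _ ≪≫ₗ LinearEquiv.ofEq _ _ hjac ≪≫ₗ
    Submodule.equivMapOfInjective _ N'.injective_subtype _⟩

theorem nonempty_radSub_iterate_equiv {N : Submodule A M} {N' : Submodule A M'}
    (e : Nonempty (N ≃ₗ[A] N')) :
    ∀ k : ℕ, Nonempty (radSub^[k] N ≃ₗ[A] radSub^[k] N')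
  | 0 => e
  | k + 1 => nonempty_radSub_iterate_equiv (nonempty_radSub_equiv e) k

variable (A M) in
/-- The `k`-th iterated radical of the module `M`. -/
abbrev radPow (k : ℕ) : Submodule A M := radSub^[k] ⊤

theorem radSub_iterate_eq_map_radPow (N : Submodule A M) (k : ℕ) :
    radSub^[k] N = (radPow A N k).map N.subtype := by
  rw [← radSub_iterate_map_of_injective N.injective_subtype, Submodule.map_subtype_top]

theorem map_radPow_of_bijective {f : M →ₗ[A] M'} (hf : Function.Bijective f) (k : ℕ) :
    (radPow A M k).map f = radPow A M' k := by
  rw [← radSub_iterate_map_of_injective hf.1, Submodule.map_top, LinearMap.range_eq_top.2 hf.2]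

end Radical

section Indecomposable

variable {A M N : Type} [Ring A] [AddCommGroup M] [Module A M] [AddCommGroup N] [Module A N]

theorem IsIndecomposableMod.of_equiv (hM : IsIndecomposableMod A M) (e : M ≃ₗ[A] N) :
    IsIndecomposableMod A N := by
  have := hM.1
  refine ⟨e.symm.toEquiv.nontrivial, fun L L' hL => ?_⟩
  let o := Submodule.orderIsoMapComap e.symm
  simpa [o] using hM.2 (o L) (o L') (o.isCompl hL)

theorem IsIndecomposableMod.injective_of_surjective (hM : IsIndecomposableMod A M)
    [Module.Projective A N] [Nontrivial N] {f : M →ₗ[A] N} (hf : Function.Surjective f) :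
    Function.Injective f := by
  obtain ⟨s, hs⟩ := Module.projective_lifting_property f LinearMap.id hf
  have hfs (y : N) : f (s y) = y := LinearMap.congr_fun hs y
  have hidem : IsIdempotentElem (s ∘ₗ f) := by
    ext x
    exact congrArg s (hfs (f x))
  rcases hM.2 _ _ (LinearMap.IsIdempotentElem.isCompl hidem) with hrange | hker
  · obtain ⟨y, hy⟩ := exists_ne (0 : N)
    obtain ⟨x, rfl⟩ := hf y
    have hx := LinearMap.congr_fun (LinearMap.range_eq_bot.1 hrange) x
    exact absurd (by rw [← hfs (f x), ← LinearMap.comp_apply s, hx]; simp) hy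
  · have hinj : Function.Injective (s ∘ f) := LinearMap.ker_eq_bot.1 hker
    exact hinj.of_comp

theorem IsIndecomposableMod.bijective_or_isNilpotent [IsArtinian A M] [IsNoetherian A M]
    (hM : IsIndecomposableMod A M) (u : Module.End A M) :
    Function.Bijective u ∨ IsNilpotent u := by
  obtain ⟨n, hn⟩ := Filter.eventually_atTop.1 u.eventually_isCompl_ker_pow_range_pow
  rcases hM.2 _ _ (hn (n + 1) n.le_succ) with hker | hrange
  · refine .inl (IsArtinian.bijective_of_injective_endomorphism u ?_)
    rw [pow_succ] at hker
    have hinj : Function.Injective (⇑(u ^ n) ∘ ⇑u) := LinearMap.ker_eq_bot.1 hker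
    exact hinj.of_comp
  · exact .inr ⟨n + 1, LinearMap.range_eq_bot.1 hrange⟩

theorem IsIndecomposableMod.le_jacobson_of_ne_top [IsArtinian A M] [IsNoetherian A M]
    [Module.Projective A M] (hM : IsIndecomposableMod A M) {B : Submodule A M} (hB : B ≠ ⊤) :
    B ≤ Module.jacobson A M := by
  -- If `B ⊄ C` for a maximal `C`, projectivity gives an endomorphism with image in `B` that induces
  -- the identity on `M ⧸ C`, so it is not nilpotent.
  refine le_sInf fun C (hC : IsCoatom C) => ?_
  by_contra hBC
  have hsup : C ⊔ B = ⊤ := hC.2 _ (left_lt_sup.2 hBC)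
  have hsurj : Function.Surjective (C.mkQ ∘ₗ B.subtype) := by
    rw [← LinearMap.range_eq_top, LinearMap.range_comp, Submodule.range_subtype,
      Submodule.map_mkQ_eq_top, hsup]
  obtain ⟨g, hg⟩ := Module.projective_lifting_property _ C.mkQ hsurj
  let u : Module.End A M := B.subtype ∘ₗ g
  have hu : C.mkQ ∘ₗ u = C.mkQ := hg
  rcases hM.bijective_or_isNilpotent u with hbij | ⟨k, hk⟩
  · refine hB (eq_top_iff.2 fun x _ => ?_)
    obtain ⟨y, rfl⟩ := hbij.2 x
    exact (g y).2
  · have hpow (k : ℕ) : C.mkQ ∘ₗ (u ^ k) = C.mkQ := by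
      induction k with
      | zero => rfl
      | succ k ih => rw [pow_succ', Module.End.mul_eq_comp, ← LinearMap.comp_assoc, hu, ih]
    refine hC.1 ?_
    rw [← C.ker_mkQ, ← hpow k, hk, LinearMap.comp_zero, LinearMap.ker_zero]

theorem IsIndecomposableMod.le_radSub_of_lt {L : Submodule A M} [IsArtinian A L]
    [IsNoetherian A L] [Module.Projective A L] (hL : IsIndecomposableMod A L)
    {B : Submodule A M} (hB : B < L) : B ≤ radSub L := by
  have hne : B.comap L.subtype ≠ ⊤ := fun h => hB.not_ge (Submodule.comap_subtype_eq_top.1 h)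
  have hrange : B ≤ LinearMap.range L.subtype := L.range_subtype.symm ▸ hB.le
  rw [radSub_eq_map_jacobson, ← Submodule.map_comap_eq_of_le hrange]
  exact Submodule.map_mono (hL.le_jacobson_of_ne_top hne)

end Indecomposable

theorem le_or_exists_eq_of_forall_lt_le_succ {α : Type*} [PartialOrder α] {c : ℕ → α} {n : ℕ}
    (hc : ∀ k < n, ∀ b < c k, b ≤ c (k + 1)) {b : α} (hb : b ≤ c 0) :
    b ≤ c n ∨ ∃ k < n, b = c k := by
  induction n with
  | zero => exact .inl hb
  | succ n ih =>
    rcases ih fun k hk => hc k (hk.trans n.lt_succ_self) with hle | ⟨k, hk, rfl⟩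
    · rcases hle.eq_or_lt with rfl | hlt
      · exact .inr ⟨n, n.lt_succ_self, rfl⟩
      · exact .inl (hc n n.lt_succ_self b hlt)
    · exact .inr ⟨k, hk.trans n.lt_succ_self, rfl⟩

section RightIdeal

instance moduleFinite_mulOpposite : Module.Finite Rᵐᵒᵖ R :=
  .equiv (regularRightModuleEquiv R).symm

instance moduleProjective_mulOpposite : Module.Projective Rᵐᵒᵖ R :=
  .of_equiv (regularRightModuleEquiv R).symm

variable {e x : R}

theorem self_mem_rightIdeal : e ∈ rightIdeal R e :=
  Submodule.mem_span_singleton_self e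

theorem mul_eq_self_of_mem_rightIdeal (he : IsIdempotentElem e) (hx : x ∈ rightIdeal R e) :
    e * x = x := by
  obtain ⟨a, rfl⟩ := Submodule.mem_span_singleton.1 hx
  rw [mul_smul_comm, he]

variable (e) in
/-- The map `R → eR`, `r ↦ e r`; a retraction when `e` is idempotent. -/
def toRightIdeal : R →ₗ[Rᵐᵒᵖ] rightIdeal R e :=
  (rightOrbitMap e).codRestrict _ fun r => Submodule.smul_mem _ (op r) self_mem_rightIdeal

theorem toRightIdeal_coe (he : IsIdempotentElem e) (x : rightIdeal R e) :
    toRightIdeal e (x : R) = x :=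
  Subtype.ext (mul_eq_self_of_mem_rightIdeal he x.2)

theorem projective_rightIdeal (he : IsIdempotentElem e) :
    Module.Projective Rᵐᵒᵖ (rightIdeal R e) :=
  .of_split (rightIdeal R e).subtype (toRightIdeal e) (LinearMap.ext (toRightIdeal_coe he))

variable {ι : Type} [Fintype ι] {e : ι → R}

theorem nonempty_equiv_pi_rightIdeal (he : CompleteOrthogonalIdempotents e) :
    Nonempty ((∀ a, rightIdeal R (e a)) ≃ₗ[Rᵐᵒᵖ] R) := by
  classical
  let f : R →ₗ[Rᵐᵒᵖ] ∀ a, rightIdeal R (e a) := LinearMap.pi fun a => toRightIdeal (e a)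
  have hinj : Function.Injective f := by
    refine (injective_iff_map_eq_zero f).2 fun x hx => ?_
    have hx' (a : ι) : e a * x = 0 := congrArg Subtype.val (congrFun hx a)
    rw [← one_mul x, ← he.complete, Finset.sum_mul, Finset.sum_eq_zero fun a _ => hx' a]
  have hsurj : Function.Surjective f := by
    intro y
    refine ⟨∑ b, (y b : R), funext fun a => Subtype.ext ?_⟩
    have hy (b : ι) : e a * (y b : R) = if a = b then (y b : R) else 0 := by
      rw [← mul_eq_self_of_mem_rightIdeal (he.idem b) (y b).2, ← mul_assoc, he.mul_eq]
      split_ifs with hab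
      · rw [hab]
      · rw [zero_mul]
    calc e a * ∑ b, (y b : R) = ∑ b, if a = b then (y b : R) else 0 := by
          rw [Finset.mul_sum, Finset.sum_congr rfl fun b _ => hy b]
      _ = y a := by simp
  exact ⟨(LinearEquiv.ofBijective f ⟨hinj, hsurj⟩).symm⟩

theorem HasProjectiveLifts.of_completeOrthogonalIdempotents {I : Submodule Rᵐᵒᵖ R}
    (he : CompleteOrthogonalIdempotents e)
    (h : ∀ a, HasProjectiveLifts I (rightIdeal R (e a))) : HasProjectiveLifts I R :=
  (HasProjectiveLifts.pi h).of_equiv (nonempty_equiv_pi_rightIdeal he).some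

theorem eq_top_of_forall_range_rightIdeal_le {T : Type} [AddCommGroup T] [Module Rᵐᵒᵖ T]
    (he : CompleteOrthogonalIdempotents e) {L : Submodule Rᵐᵒᵖ T}
    (hL : ∀ a (φ : rightIdeal R (e a) →ₗ[Rᵐᵒᵖ] T), LinearMap.range φ ≤ L) : L = ⊤ := by
  refine eq_top_iff.2 fun t _ => ?_
  have ht : t = ∑ a, op (e a) • t := by
    rw [← Finset.sum_smul, ← Finset.op_sum, he.complete, op_one, one_smul]
  rw [ht]
  exact L.sum_mem fun a _ => hL a (rightOrbitMap t ∘ₗ (rightIdeal R (e a)).subtype)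
    ⟨⟨e a, self_mem_rightIdeal⟩, rfl⟩

end RightIdeal

namespace HaradaData

variable (H : HaradaData R)

/-- The indecomposable projective right module `e_{i,j+1}R`; here `j` starts from `0`. -/
abbrev indecProj (i : Fin H.m) (j : Fin (H.n i)) : Submodule Rᵐᵒᵖ R :=
  rightIdeal R (H.e i j)

/-- The first, injective, indecomposable projective `e_{i1}R` of the `i`-th block. -/
abbrev injProj (i : Fin H.m) : Submodule Rᵐᵒᵖ R :=
  H.indecProj i ⟨0, H.hn i⟩

instance (i : Fin H.m) (j : Fin (H.n i)) : Module.Projective Rᵐᵒᵖ (H.indecProj i j) :=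
  projective_rightIdeal (H.idem i j)

instance (i : Fin H.m) : Module.Injective Rᵐᵒᵖ (H.injProj i) :=
  H.inj i

theorem completeOrthogonalIdempotents :
    CompleteOrthogonalIdempotents fun p : Σ i : Fin H.m, Fin (H.n i) => H.e p.1 p.2 where
  idem p := H.idem p.1 p.2
  ortho p q := H.orth p q
  complete := H.sum_eq_one

theorem nonempty_indecProj_equiv_radPow {i : Fin H.m} {j l : Fin (H.n i)} {k : ℕ}
    (hl : j.val + k = l.val) :
    Nonempty (H.indecProj i l ≃ₗ[Rᵐᵒᵖ] radPow Rᵐᵒᵖ (H.indecProj i j) k) := by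
  induction k generalizing l with
  | zero =>
    obtain rfl : j = l := Fin.ext hl
    exact ⟨Submodule.topEquiv.symm⟩
  | succ k ih =>
    obtain ⟨e⟩ := H.rad_iso i l (by lia)
    obtain ⟨f⟩ := nonempty_radSub_equiv (ih (l := ⟨l.val - 1, by lia⟩) (by grind))
    rw [radPow, Function.iterate_succ_apply']
    exact ⟨e ≪≫ₗ f⟩

section Chain

variable {i : Fin H.m} {j : Fin (H.n i)} {k : ℕ}

theorem isIndecomposableMod_radPow (hk : k < H.n i - j) :
    IsIndecomposableMod Rᵐᵒᵖ (radPow Rᵐᵒᵖ (H.indecProj i j) k) := by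
  obtain ⟨e⟩ := H.nonempty_indecProj_equiv_radPow (j := j) (l := ⟨j + k, by lia⟩) rfl
  exact (H.indec _ _).of_equiv e

theorem projective_radPow (hk : k < H.n i - j) :
    Module.Projective Rᵐᵒᵖ (radPow Rᵐᵒᵖ (H.indecProj i j) k) := by
  obtain ⟨e⟩ := H.nonempty_indecProj_equiv_radPow (j := j) (l := ⟨j + k, by lia⟩) rfl
  exact .of_equiv e

variable (i j) in
theorem radPow_le_smulSub :
    radPow Rᵐᵒᵖ (H.indecProj i j) (H.n i - j) ≤ smulSub H.I (H.indecProj i j) := by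
  intro x hx
  have hxI : (x : R) ∈ H.I := by
    refine Submodule.mem_iSup_of_mem ⟨i, j⟩ ?_
    rw [radSub_iterate_eq_map_radPow]
    exact ⟨x, hx, rfl⟩
  rw [← toRightIdeal_coe (H.idem i j) x]
  exact Submodule.subset_span ⟨⟨H.e i j, self_mem_rightIdeal⟩, x, hxI, rfl⟩

variable [IsArtinianRing Rᵐᵒᵖ]

theorem le_radPow_or_exists_eq_radPow (L : Submodule Rᵐᵒᵖ (H.indecProj i j)) :
    L ≤ radPow Rᵐᵒᵖ (H.indecProj i j) (H.n i - j) ∨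
      ∃ k < H.n i - j, L = radPow Rᵐᵒᵖ (H.indecProj i j) k := by
  refine le_or_exists_eq_of_forall_lt_le_succ (fun k hk B hB => ?_) le_top
  have := H.projective_radPow hk
  rw [radPow, Function.iterate_succ_apply']
  exact (H.isIndecomposableMod_radPow hk).le_radSub_of_lt hB

theorem radPow_succ_lt (hk : k < H.n i - j) :
    radPow Rᵐᵒᵖ (H.indecProj i j) (k + 1) < radPow Rᵐᵒᵖ (H.indecProj i j) k := by
  have := (H.isIndecomposableMod_radPow hk).1
  rw [radPow, Function.iterate_succ_apply']
  exact radSub_lt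

variable (i j) in
theorem hasProjectiveLifts_indecProj : HasProjectiveLifts H.I (H.indecProj i j) := by
  intro L hL
  rcases H.le_radPow_or_exists_eq_radPow L with hle | ⟨k, hk, rfl⟩
  · refine ⟨⊥, inferInstance, ?_⟩
    rw [bot_sup_eq]
    exact hL.antisymm (hle.trans (H.radPow_le_smulSub i j))
  · exact ⟨_, H.projective_radPow hk, sup_eq_left.2 hL⟩

theorem hasProjectiveLifts : HasProjectiveLifts H.I R :=
  .of_completeOrthogonalIdempotents H.completeOrthogonalIdempotents fun p =>
    H.hasProjectiveLifts_indecProj p.1 p.2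

end Chain

theorem I_le_jacobson : H.I ≤ Module.jacobson Rᵐᵒᵖ R :=
  iSup_le fun p => (radSub_iterate_anti _ (Nat.sub_pos_of_lt p.2.isLt)).trans
    (radSub_le_jacobson _)

section Trace

variable [IsArtinianRing Rᵐᵒᵖ] {i q : Fin H.m}

theorem range_le_radPow_or_bijective (ψ : H.injProj i →ₗ[Rᵐᵒᵖ] H.injProj q) :
    LinearMap.range ψ ≤ radPow Rᵐᵒᵖ (H.injProj q) (H.n q) ∨
      i = q ∧ Function.Bijective ψ := by
  rcases H.le_radPow_or_exists_eq_radPow (LinearMap.range ψ) with hle | ⟨k, hk, hrange⟩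
  · exact .inl hle
  · have : Module.Projective Rᵐᵒᵖ (LinearMap.range ψ) := hrange ▸ H.projective_radPow hk
    have : Nontrivial (LinearMap.range ψ) := hrange ▸ (H.isIndecomposableMod_radPow hk).1
    obtain ⟨e⟩ := H.nonempty_indecProj_equiv_radPow (j := ⟨0, H.hn q⟩) (l := ⟨k, hk⟩)
      (Nat.zero_add k)
    have hinj : Function.Injective ψ := by
      rw [← LinearMap.injective_rangeRestrict_iff]
      exact (H.indec i _).injective_of_surjective (N := LinearMap.range ψ)
        ψ.surjective_rangeRestrict
    have heq : (⟨i, ⟨0, H.hn i⟩⟩ : Σ i : Fin H.m, Fin (H.n i)) = ⟨q, ⟨k, hk⟩⟩ := by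
      by_contra hne
      exact (H.basic _ _ hne).false
        (LinearEquiv.ofInjective ψ hinj ≪≫ₗ LinearEquiv.ofEq _ _ hrange ≪≫ₗ e.symm)
    cases heq
    exact .inr ⟨rfl, hinj, LinearMap.range_eq_top.1 hrange⟩

theorem range_le_radPow_of_map_radPow_le {j : Fin (H.n i)}
    {ψ : H.injProj i →ₗ[Rᵐᵒᵖ] H.injProj q}
    (hψ : (radPow Rᵐᵒᵖ (H.injProj i) j).map ψ ≤ radPow Rᵐᵒᵖ (H.injProj q) (H.n q)) :
    LinearMap.range ψ ≤ radPow Rᵐᵒᵖ (H.injProj q) (H.n q) := by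
  refine (H.range_le_radPow_or_bijective ψ).resolve_right ?_
  rintro ⟨rfl, hbij⟩
  rw [map_radPow_of_bijective hbij] at hψ
  exact (H.radPow_succ_lt j.isLt).not_ge (hψ.trans (radSub_iterate_anti _ j.isLt))

theorem range_le_injectiveTrace_radPow {j : Fin (H.n i)}
    (φ : H.indecProj i j →ₗ[Rᵐᵒᵖ] radPow Rᵐᵒᵖ (H.injProj q) (H.n q)) :
    LinearMap.range φ ≤ injectiveTrace Rᵐᵒᵖ (radPow Rᵐᵒᵖ (H.injProj q) (H.n q)) := by
  obtain ⟨e⟩ := H.nonempty_indecProj_equiv_radPow (j := ⟨0, H.hn i⟩) (Nat.zero_add j.val)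
  obtain ⟨ψ, hψ⟩ := Module.Injective.extension_property Rᵐᵒᵖ _ _ _ (Submodule.subtype _)
    (Submodule.injective_subtype _) (Submodule.subtype _ ∘ₗ φ ∘ₗ e.symm.toLinearMap)
  have hψe (x : H.indecProj i j) : ψ (e x) = φ x := by
    simpa using LinearMap.congr_fun hψ (e x)
  have hrange : LinearMap.range ψ ≤ radPow Rᵐᵒᵖ (H.injProj q) (H.n q) := by
    refine H.range_le_radPow_of_map_radPow_le (j := j) ?_
    rintro _ ⟨y, hy, rfl⟩
    obtain ⟨x, hx⟩ := e.surjective ⟨y, hy⟩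
    have hxy := hψe x
    rw [hx] at hxy
    exact hxy ▸ (φ x).2
  rintro _ ⟨x, rfl⟩
  exact range_le_injectiveTrace (ψ.codRestrict _ fun y => hrange ⟨y, rfl⟩)
    ⟨e x, Subtype.ext (hψe x)⟩

theorem injectiveTrace_radPow (q : Fin H.m) :
    injectiveTrace Rᵐᵒᵖ (radPow Rᵐᵒᵖ (H.injProj q) (H.n q)) = ⊤ :=
  eq_top_of_forall_range_rightIdeal_le (T := radPow Rᵐᵒᵖ (H.injProj q) (H.n q))
    H.completeOrthogonalIdempotents fun _ φ => H.range_le_injectiveTrace_radPow φ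

theorem injectiveTrace_I : injectiveTrace Rᵐᵒᵖ H.I = ⊤ := by
  refine injectiveTrace_iSup fun ⟨q, l⟩ => ?_
  obtain ⟨e⟩ := nonempty_radSub_iterate_equiv
    (H.nonempty_indecProj_equiv_radPow (j := ⟨0, H.hn q⟩) (Nat.zero_add l.val)) (H.n q - l)
  rw [radPow, ← Function.iterate_add_apply, Nat.sub_add_cancel l.isLt.le] at e
  exact injectiveTrace_eq_top_of_surjective e.symm.surjective (H.injectiveTrace_radPow q)

end Trace

end HaradaData

theorem statement12_general {R : Type} [Ring R] [IsArtinianRing Rᵐᵒᵖ] (H : HaradaData R)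
    {S : Type} [Ring S] {π : R →+* S} (hsurj : Function.Surjective π)
    (hker : ∀ x : R, π x = 0 ↔ x ∈ H.I) :
    ∃ Φ : Quotient (isoSetoid Rᵐᵒᵖ fun M => Module.Finite Rᵐᵒᵖ M ∧ PdLeOne Rᵐᵒᵖ M) →
        Quotient (isoSetoid Sᵐᵒᵖ fun M => Module.Finite Sᵐᵒᵖ M),
      Function.Bijective Φ ∧
      ∀ (T : {M : ModuleCat.{0} Rᵐᵒᵖ // Module.Finite Rᵐᵒᵖ M ∧ PdLeOne Rᵐᵒᵖ M})
        (N : {M : ModuleCat.{0} Sᵐᵒᵖ // Module.Finite Sᵐᵒᵖ M}),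
        Nonempty (RestrictRight π N.1 ≃ₗ[Rᵐᵒᵖ] (T.1 ⧸ smulSub H.I T.1)) →
        Φ (Quotient.mk _ T) = Quotient.mk _ N :=
  exists_bijective_isoClasses H.I_le_jacobson H.injectiveTrace_I H.hasProjectiveLifts hsurj hker

/-- Lemma 4.1(1).  The functor `F = − ⊗_R R̄`, where `R̄ = R/I` (here
presented by a surjective ring homomorphism `π : R → S` with kernel `I`, and with
`F T = T/T·I` equipped with its natural `S`-module structure), induces a bijection from the
set of isomorphism classes of finitely generated right `R`-modules of projective dimension
at most one onto the set of isomorphism classes of finitely generated right `S`-modules. -/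
theorem statement12 (K R : Type) [Field K] [IsAlgClosed K] [Ring R] [Algebra K R]
    [FiniteDimensional K R] (H : HaradaData R)
    (S : Type) [Ring S] (π : R →+* S) (hsurj : Function.Surjective π)
    (hker : ∀ x : R, π x = 0 ↔ x ∈ H.I) :
    ∃ Φ : Quotient (isoSetoid Rᵐᵒᵖ
            fun M => Module.Finite Rᵐᵒᵖ ↥M ∧ PdLeOne Rᵐᵒᵖ ↥M) →
          Quotient (isoSetoid Sᵐᵒᵖ fun M => Module.Finite Sᵐᵒᵖ ↥M),
      Function.Bijective Φ ∧
      ∀ (T : {M : ModuleCat.{0} Rᵐᵒᵖ // Module.Finite Rᵐᵒᵖ ↥M ∧ PdLeOne Rᵐᵒᵖ ↥M})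
        (N : {M : ModuleCat.{0} Sᵐᵒᵖ // Module.Finite Sᵐᵒᵖ ↥M}),
        Nonempty (RestrictRight π ↥N.1 ≃ₗ[Rᵐᵒᵖ] (↥T.1 ⧸ smulSub H.I ↥T.1)) →
        Φ (Quotient.mk _ T) = Quotient.mk _ N := by
  have : IsArtinianRing Rᵐᵒᵖ := .of_finite K Rᵐᵒᵖ
  exact statement12_general H hsurj hker
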